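/- Let G be a finite simple graph, M a maximum matching of G, and (H, H') ∈ M₂(G, M). Let P : v₀, m₁, v₁, h₁, v₂, m₂, …, h_{l−1}, v_{2l−2}, m_l, v_{2l−1} be a path in G (all vertices distinct) whose edges alternately satisfy m_i ∈ M \ H and h_i ∈ H \ M, whose first and last edges m₁, m_l are from M \ H, and whose end-vertices v₀ and v_{2l−1} are not covered by H (so P is a maximal M-H alternating path of odd length starting and ending with edges of M). Then (1) m₁ ∈ H' and m_l ∈ H', and (2) l ≥ 3, i.e., the length of P is at least five. -/

import Mathlib

open SimpleGraph

/-- A matching of `G`, given as a finite set of edges of `G` that are pairwise non-adjacent. -/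
def IsMatchingE {V : Type*} (G : SimpleGraph V) (M : Finset (Sym2 V)) : Prop :=
  ↑M ⊆ G.edgeSet ∧ ∀ e ∈ M, ∀ f ∈ M, e ≠ f → ∀ v : V, ¬(v ∈ e ∧ v ∈ f)

/-- A vertex is covered by a set of edges if some edge of it is incident to the vertex. -/
def Covers {V : Type*} (M : Finset (Sym2 V)) (v : V) : Prop := ∃ e ∈ M, v ∈ e

/-- `β(G)`: the maximum size of a matching of `G`. -/
noncomputable def gBeta {V : Type*} (G : SimpleGraph V) : ℕ :=
  sSup {n | ∃ M : Finset (Sym2 V), IsMatchingE G M ∧ M.card = n}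

/-- `λ(G)`: the maximum of `|H| + |H'|` over pairs `(H, H')` of disjoint matchings of `G`. -/
noncomputable def gLam {V : Type*} (G : SimpleGraph V) : ℕ :=
  sSup {n | ∃ H H' : Finset (Sym2 V), IsMatchingE G H ∧ IsMatchingE G H' ∧
    Disjoint H H' ∧ H.card + H'.card = n}

/-- `α(G)`: the maximum of `|H|` over pairs `(H, H')` of disjoint matchings of `G`
with `|H| + |H'| = λ(G)`. -/
noncomputable def gAlpha {V : Type*} (G : SimpleGraph V) : ℕ :=
  sSup {n | ∃ H H' : Finset (Sym2 V), IsMatchingE G H ∧ IsMatchingE G H' ∧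
    Disjoint H H' ∧ H.card + H'.card = gLam G ∧ H.card = n}

/-- `β₁(G)`: the maximum of `β(G \ F)` over maximum matchings `F` of `G`. -/
noncomputable def gBeta1 {V : Type*} (G : SimpleGraph V) : ℕ :=
  sSup {n | ∃ F : Finset (Sym2 V), IsMatchingE G F ∧ F.card = gBeta G ∧
    gBeta (G.deleteEdges ↑F) = n}

/-- Membership in `M₂(G)`: `(H, H')` is a pair of disjoint matchings of `G` with
`|H| + |H'| = λ(G)` and `|H| = α(G)`. -/
def InM2 {V : Type*} (G : SimpleGraph V) (H H' : Finset (Sym2 V)) : Prop :=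
  IsMatchingE G H ∧ IsMatchingE G H' ∧ Disjoint H H' ∧
  H.card + H'.card = gLam G ∧ H.card = gAlpha G

/-- Membership in `M₂(G, M)`: pairs from `M₂(G)` maximizing `|M ∩ (H ∪ H')|`. -/
def InM2M {V : Type*} [DecidableEq V] (G : SimpleGraph V) (M H H' : Finset (Sym2 V)) : Prop :=
  InM2 G H H' ∧ ∀ K K' : Finset (Sym2 V), InM2 G K K' →
    (M ∩ (K ∪ K')).card ≤ (M ∩ (H ∪ H')).card

/-- The degree of a vertex `v` in the graph `F`. -/
noncomputable def fdeg {V : Type*} (F : SimpleGraph V) (v : V) : ℕ := (F.neighborSet v).ncard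

/-- The spanner: two paths `a₁a₂a₃a₄a₅` and `b₁b₂b₃b₄b₅` joined by the edge `a₃b₃`.
Vertices `0..4` are `a₁..a₅` and `5..9` are `b₁..b₅`. -/
def Spanner10 : SimpleGraph (Fin 10) :=
  SimpleGraph.fromEdgeSet
    {s(0, 1), s(1, 2), s(2, 3), s(3, 4), s(5, 6), s(6, 7), s(7, 8), s(8, 9), s(2, 7)}

/-- An S-forest: every connected component is isomorphic to the spanner. -/
def IsSForest {V : Type*} (F : SimpleGraph V) : Prop :=
  ∀ c : F.ConnectedComponent, Nonempty ((F.induce c.supp) ≃g Spanner10)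

/-- `U(F)`: edges of `F` incident to a vertex of degree 1. -/
def USet {V : Type*} (F : SimpleGraph V) : Set (Sym2 V) :=
  {e | e ∈ F.edgeSet ∧ ∃ v ∈ e, fdeg F v = 1}

/-- `L(F)`: edges of `F` not in `U(F)` incident to a vertex of degree 2. -/
def LSet {V : Type*} (F : SimpleGraph V) : Set (Sym2 V) :=
  {e | e ∈ F.edgeSet ∧ e ∉ USet F ∧ ∃ v ∈ e, fdeg F v = 2}

/-- `w` is the base of the 1-vertex `u` of `F`: a 3-vertex at `F`-distance 2 from `u`. -/
def IsBase {V : Type*} (F : SimpleGraph V) (u w : V) : Prop :=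
  fdeg F w = 3 ∧ F.dist u w = 2

/-- `Δ(G, F)`: edges of `G` joining a 1-vertex of `F` to its base. -/
def DeltaSet {V : Type*} (G F : SimpleGraph V) : Set (Sym2 V) :=
  {e | e ∈ G.edgeSet ∧ ∃ u w : V, e = s(u, w) ∧ fdeg F u = 1 ∧ IsBase F u w}

/-- `B(G, F) = E(G) \ (U(F) ∪ L(F) ∪ Δ(G, F))`. -/
def BSet {V : Type*} (G F : SimpleGraph V) : Set (Sym2 V) :=
  G.edgeSet \ (USet F ∪ LSet F ∪ DeltaSet G F)

/-- Condition (a): no 1-vertex of `F` is incident to an edge from `B(G, F)`. -/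
def CondA {V : Type*} (G F : SimpleGraph V) : Prop :=
  ∀ v : V, fdeg F v = 1 → ∀ e ∈ BSet G F, v ∉ e

/-- Condition (b): if a 1-vertex `u` of `F` is incident to an edge from `Δ(G, F)`, then
the 2-vertex of `F` adjacent to `u` in `F` is not incident to any edge from `B(G, F)`. -/
def CondB {V : Type*} (G F : SimpleGraph V) : Prop :=
  ∀ u v : V, fdeg F u = 1 → (∃ e ∈ DeltaSet G F, u ∈ e) →
    F.Adj u v → fdeg F v = 2 → ∀ e ∈ BSet G F, v ∉ e

/-- Condition (c): for every `L(F)`-`B(G, F)` alternating even closed trail of `G`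
containing an edge joining two 2-vertices of `F`, the graph formed by its edges belonging
to `B(G, F)` is not bipartite (2-colorable). -/
def CondC {V : Type*} (G F : SimpleGraph V) : Prop :=
  ∀ (n : ℕ) (e : ℕ → Sym2 V),
    1 ≤ n →
    (∀ i j, i < 2 * n → j < 2 * n → e i = e j → i = j) →
    (∀ i, i < 2 * n → e i ∈ G.edgeSet) →
    (∀ i, i + 1 < 2 * n → ∃ v : V, v ∈ e i ∧ v ∈ e (i + 1)) →
    (∃ v : V, v ∈ e (2 * n - 1) ∧ v ∈ e 0) →
    (∀ i, i < 2 * n → (i % 2 = 0 → e i ∈ LSet F) ∧ (i % 2 = 1 → e i ∈ BSet G F)) →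
    (∃ i, i < 2 * n ∧ ∀ v ∈ e i, fdeg F v = 2) →
    ¬ (SimpleGraph.fromEdgeSet {f | ∃ i, i < 2 * n ∧ f = e i ∧ f ∈ BSet G F}).Colorable 2

/-!
A pair in `M₂(G)` is lexicographically maximal for `(|H| + |H'|, |H|)` among pairs of disjoint
matchings, so no exchange may keep the total size and enlarge `H`. If the path had length one, its
edge could be moved into `H`. Otherwise consider an end of the path, with edge `m` at the end and
next edge `h`. Replacing `h` by `m` preserves the size of `H`; if `m` were outside `H'`, the new
pair would still be in `M₂(G)` and would contain one more edge of `M`. Hence both outer edges lie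
in `H'`, and if the path had length three, interchanging `H` and `H'` along it would enlarge `H`.
-/

theorem Covers.mono {V : Type*} {A B : Finset (Sym2 V)} (hAB : A ⊆ B) {v : V}
    (h : Covers A v) : Covers B v :=
  let ⟨e, he, hv⟩ := h
  ⟨e, hAB he, hv⟩

theorem covers_insert {V : Type*} [DecidableEq V] {A : Finset (Sym2 V)} {e : Sym2 V} {v : V} :
    Covers (insert e A) v ↔ v ∈ e ∨ Covers A v :=
  Finset.exists_mem_insert ..

theorem notMem_of_not_covers {V : Type*} {A : Finset (Sym2 V)} {e : Sym2 V} {v : V}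
    (h : ¬ Covers A v) (hv : v ∈ e) : e ∉ A :=
  fun he => h ⟨e, he, hv⟩

/-- The sizes of the matchings of `G` are bounded. The suprema defining `β(G)`, `λ(G)` and `α(G)`
are then attained; in general they may be the junk value `0` that `sSup` takes on an unbounded
set of naturals. -/
def HasBoundedMatchings {V : Type*} (G : SimpleGraph V) : Prop :=
  ∃ n, ∀ A : Finset (Sym2 V), IsMatchingE G A → A.card ≤ n

theorem HasBoundedMatchings.of_finite {V : Type*} [Finite V] (G : SimpleGraph V) :
    HasBoundedMatchings G :=
  have := Fintype.ofFinite (Sym2 V)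
  ⟨Fintype.card (Sym2 V), fun A _ => A.card_le_univ⟩

namespace IsMatchingE

variable {V : Type*} {G : SimpleGraph V} {A B : Finset (Sym2 V)} {e f : Sym2 V}

theorem mono (hB : IsMatchingE G B) (hAB : A ⊆ B) : IsMatchingE G A :=
  ⟨fun _ he => hB.1 (hAB he), fun e he f hf => hB.2 e (hAB he) f (hAB hf)⟩

theorem eq_of_mem (hA : IsMatchingE G A) (he : e ∈ A) (hf : f ∈ A) {v : V}
    (hve : v ∈ e) (hvf : v ∈ f) : e = f :=
  by_contra fun hne => hA.2 e he f hf hne v ⟨hve, hvf⟩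

theorem ne_of_not_covers (hA : IsMatchingE G A) {a b c d : V} (hbc : s(b, c) ∈ A)
    (ha : ¬ Covers A a) : s(a, b) ≠ s(c, d) := by
  intro heq
  rcases Sym2.eq_iff.1 heq with ⟨rfl, -⟩ | ⟨-, rfl⟩
  · exact notMem_of_not_covers ha (Sym2.mem_mk_right b a) hbc
  · exact G.loopless.irrefl b (hA.1 hbc)

variable [DecidableEq V]

theorem not_covers_erase (hA : IsMatchingE G A) (he : e ∈ A) {v : V} (hv : v ∈ e) :
    ¬ Covers (A.erase e) v := by
  rintro ⟨f, hf, hvf⟩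
  obtain ⟨hne, hfA⟩ := Finset.mem_erase.1 hf
  exact hne (hA.eq_of_mem hfA he hvf hv)

protected theorem insert (hA : IsMatchingE G A) (he : e ∈ G.edgeSet) (h : ∀ v ∈ e, ¬ Covers A v) :
    IsMatchingE G (insert e A) := by
  refine ⟨by simpa only [Finset.coe_insert] using Set.insert_subset he hA.1, ?_⟩
  intro f hf g hg hne v ⟨hvf, hvg⟩
  rcases Finset.mem_insert.1 hf with rfl | hfA <;> rcases Finset.mem_insert.1 hg with rfl | hgA
  · exact hne rfl
  · exact h v hvf ⟨g, hgA, hvg⟩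
  · exact h v hvg ⟨f, hfA, hvf⟩
  · exact hA.2 f hfA g hgA hne v ⟨hvf, hvg⟩

theorem insert_insert_erase (hA : IsMatchingE G A) {a b c d : V} (hbc : s(b, c) ∈ A)
    (hab : s(a, b) ∈ G.edgeSet) (hcd : s(c, d) ∈ G.edgeSet)
    (hdisj : ∀ v ∈ s(a, b), v ∉ s(c, d)) (ha : ¬ Covers A a) (hd : ¬ Covers A d) :
    IsMatchingE G (insert s(a, b) (insert s(c, d) (A.erase s(b, c)))) := by
  have hsub : A.erase s(b, c) ⊆ A := Finset.erase_subset _ _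
  have hfree_ab : ∀ v ∈ s(a, b), ¬ Covers (A.erase s(b, c)) v :=
    Sym2.ball.2 ⟨mt (Covers.mono hsub) ha, hA.not_covers_erase hbc (Sym2.mem_mk_left b c)⟩
  have hfree_cd : ∀ v ∈ s(c, d), ¬ Covers (A.erase s(b, c)) v :=
    Sym2.ball.2 ⟨hA.not_covers_erase hbc (Sym2.mem_mk_right b c), mt (Covers.mono hsub) hd⟩
  refine ((hA.mono hsub).insert hcd hfree_cd).insert hab fun v hv hcov => ?_
  exact (covers_insert.1 hcov).elim (hdisj v hv) (hfree_ab v hv)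

theorem insert_erase_erase (hA : IsMatchingE G A) {a b c d : V} (hab : s(a, b) ∈ A)
    (hcd : s(c, d) ∈ A) (hbc : s(b, c) ∈ G.edgeSet) :
    IsMatchingE G (insert s(b, c) ((A.erase s(a, b)).erase s(c, d))) := by
  have hb : ¬ Covers ((A.erase s(a, b)).erase s(c, d)) b :=
    mt (Covers.mono (Finset.erase_subset _ _)) (hA.not_covers_erase hab (Sym2.mem_mk_right a b))
  have hc : ¬ Covers ((A.erase s(a, b)).erase s(c, d)) c :=
    mt (Covers.mono (Finset.erase_subset_erase _ (Finset.erase_subset _ _)))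
      (hA.not_covers_erase hcd (Sym2.mem_mk_left c d))
  have hsub : (A.erase s(a, b)).erase s(c, d) ⊆ A :=
    (Finset.erase_subset _ _).trans (Finset.erase_subset _ _)
  exact (hA.mono hsub).insert hbc (Sym2.ball.2 ⟨hb, hc⟩)

end IsMatchingE

section Suprema

variable {V : Type*} {G : SimpleGraph V} {K K' : Finset (Sym2 V)}

theorem card_add_card_le_gLam (hG : HasBoundedMatchings G) (hK : IsMatchingE G K)
    (hK' : IsMatchingE G K') (hdisj : Disjoint K K') : K.card + K'.card ≤ gLam G := by
  obtain ⟨n, hn⟩ := hG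
  refine le_csSup ⟨n + n, ?_⟩ ⟨K, K', hK, hK', hdisj, rfl⟩
  rintro _ ⟨A, B, hA, hB, -, rfl⟩
  exact add_le_add (hn A hA) (hn B hB)

theorem card_le_gAlpha (hG : HasBoundedMatchings G) (hK : IsMatchingE G K)
    (hK' : IsMatchingE G K') (hdisj : Disjoint K K') (hcard : K.card + K'.card = gLam G) :
    K.card ≤ gAlpha G := by
  obtain ⟨n, hn⟩ := hG
  refine le_csSup ⟨n, ?_⟩ ⟨K, K', hK, hK', hdisj, hcard, rfl⟩
  rintro _ ⟨A, B, hA, -, -, -, rfl⟩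
  exact hn A hA

end Suprema

namespace InM2

variable {V : Type*} {G : SimpleGraph V} {H H' K K' : Finset (Sym2 V)}

theorem of_card_eq (h : InM2 G H H') (hK : IsMatchingE G K) (hK' : IsMatchingE G K')
    (hdisj : Disjoint K K') (hcard : K.card = H.card) (hcard' : K'.card = H'.card) :
    InM2 G K K' :=
  let ⟨_, _, _, hlam, halpha⟩ := h
  ⟨hK, hK', hdisj, by rw [hcard, hcard', hlam], by rw [hcard, halpha]⟩

theorem card_le (hG : HasBoundedMatchings G) (h : InM2 G H H') (hK : IsMatchingE G K)
    (hK' : IsMatchingE G K') (hdisj : Disjoint K K')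
    (hcard : H.card + H'.card ≤ K.card + K'.card) : K.card ≤ H.card := by
  obtain ⟨-, -, -, hlam, halpha⟩ := h
  have hle : K.card + K'.card ≤ gLam G := card_add_card_le_gLam hG hK hK' hdisj
  rw [halpha]
  exact card_le_gAlpha hG hK hK' hdisj (hle.antisymm (hlam ▸ hcard))

theorem covers_or_covers_of_mem_edgeSet (hG : HasBoundedMatchings G) (h : InM2 G H H') {a b : V}
    (hab : s(a, b) ∈ G.edgeSet) : Covers H a ∨ Covers H b := by
  classical
  by_contra! hfree
  obtain ⟨ha, hb⟩ := hfree
  have ⟨hH, hH', hdisj, _⟩ := h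
  have hab_notMem : s(a, b) ∉ H := notMem_of_not_covers ha (Sym2.mem_mk_left a b)
  have hcard : (insert s(a, b) H).card = H.card + 1 := Finset.card_insert_of_notMem hab_notMem
  have hcard' : H'.card - 1 ≤ (H'.erase s(a, b)).card := Finset.pred_card_le_card_erase
  have hle : (insert s(a, b) H).card ≤ H.card :=
    h.card_le hG (hH.insert hab (Sym2.ball.2 ⟨ha, hb⟩)) (hH'.mono (Finset.erase_subset _ _))
      ((Finset.disjoint_erase_insert hab_notMem).2 hdisj) (by omega)
  omega

theorem covers_or_covers_of_alternating (hG : HasBoundedMatchings G) (h : InM2 G H H')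
    {a b c d : V} (hab : s(a, b) ∈ H') (hbc : s(b, c) ∈ H) (hcd : s(c, d) ∈ H') :
    Covers H a ∨ Covers H d := by
  classical
  by_contra! hfree
  obtain ⟨ha, hd⟩ := hfree
  have ⟨hH, hH', hdisj, _⟩ := h
  have hne : s(a, b) ≠ s(c, d) := hH.ne_of_not_covers hbc ha
  have hab_notMem : s(a, b) ∉ H := Finset.disjoint_right.1 hdisj hab
  have hcd_notMem : s(c, d) ∉ H := Finset.disjoint_right.1 hdisj hcd
  have hbc_notMem : s(b, c) ∉ H' := Finset.disjoint_left.1 hdisj hbc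
  let K := insert s(a, b) (insert s(c, d) (H.erase s(b, c)))
  let K' := insert s(b, c) ((H'.erase s(a, b)).erase s(c, d))
  have hK : IsMatchingE G K :=
    hH.insert_insert_erase hbc (hH'.1 hab) (hH'.1 hcd)
      (fun v hvab hvcd => hne (hH'.eq_of_mem hab hcd hvab hvcd)) ha hd
  have hK' : IsMatchingE G K' := hH'.insert_erase_erase hab hcd (hH.1 hbc)
  have hdisjK : Disjoint K K' := by
    rw [Finset.disjoint_left] at hdisj ⊢
    grind
  have hcard : K.card = H.card + 1 := by
    rw [Finset.card_insert_of_notMem (by grind), Finset.card_insert_of_notMem (by grind),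
      Finset.card_erase_add_one hbc]
  have hcard' : K'.card + 1 = H'.card := by
    rw [Finset.card_insert_of_notMem (by grind), Finset.card_erase_add_one (by grind),
      Finset.card_erase_add_one hab]
  have hle : K.card ≤ H.card := h.card_le hG hK hK' hdisjK (by omega)
  omega

end InM2

theorem InM2M.mem_right_of_not_covers {V : Type*} [DecidableEq V] {G : SimpleGraph V}
    {M H H' : Finset (Sym2 V)} (h : InM2M G M H H') (hM : ↑M ⊆ G.edgeSet) {a b : V} {f : Sym2 V}
    (hab : s(a, b) ∈ M \ H) (hf : f ∈ H \ M) (hbf : b ∈ f) (ha : ¬ Covers H a) :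
    s(a, b) ∈ H' := by
  by_contra habH'
  obtain ⟨hM2, hmax⟩ := h
  have ⟨hH, hH', hdisj, _⟩ := hM2
  obtain ⟨habM, habH⟩ := Finset.mem_sdiff.1 hab
  obtain ⟨hfH, hfM⟩ := Finset.mem_sdiff.1 hf
  let K := insert s(a, b) (H.erase f)
  have hsub : H.erase f ⊆ H := Finset.erase_subset f H
  have hK : IsMatchingE G K :=
    (hH.mono hsub).insert (hM habM)
      (Sym2.ball.2 ⟨mt (Covers.mono hsub) ha, hH.not_covers_erase hfH hbf⟩)
  have hcard : K.card = H.card := by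
    rw [Finset.card_insert_of_notMem (fun hmem => habH (hsub hmem)),
      Finset.card_erase_add_one hfH]
  have hdisjK : Disjoint K H' :=
    Finset.disjoint_insert_left.2 ⟨habH', hdisj.mono_left hsub⟩
  have hle : (M ∩ (K ∪ H')).card ≤ (M ∩ (H ∪ H')).card :=
    hmax K H' (hM2.of_card_eq hK hH' hdisjK hcard rfl)
  have hlt : M ∩ (H ∪ H') ⊂ M ∩ (K ∪ H') :=
    (Finset.ssubset_iff_of_subset (by grind)).2 ⟨s(a, b), by grind, by grind⟩
  exact (Finset.card_lt_card hlt).not_ge hle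

theorem stmt5_general {V : Type*} [DecidableEq V] {G : SimpleGraph V}
    (hG : HasBoundedMatchings G) {M H H' : Finset (Sym2 V)} (hM : ↑M ⊆ G.edgeSet)
    (h : InM2M G M H H') {l : ℕ} (hl : 1 ≤ l) {v : ℕ → V}
    (hedges : ∀ i, i < 2 * l - 1 →
      s(v i, v (i + 1)) ∈ (if i % 2 = 0 then M \ H else H \ M))
    (h0 : ¬ Covers H (v 0)) (h1 : ¬ Covers H (v (2 * l - 1))) :
    s(v 0, v 1) ∈ H' ∧ s(v (2 * l - 2), v (2 * l - 1)) ∈ H' ∧ 3 ≤ l := by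
  obtain ⟨k, rfl⟩ : ∃ k, l = k + 1 := ⟨l - 1, by omega⟩
  change ¬ Covers H (v (2 * k + 1)) at h1
  change _ ∧ s(v (2 * k), v (2 * k + 1)) ∈ H' ∧ _
  have hmem_M : ∀ i ≤ k, s(v (2 * i), v (2 * i + 1)) ∈ M \ H := fun i hi => by
    simpa using hedges (2 * i) (by omega)
  have hmem_H : ∀ i < k, s(v (2 * i + 1), v (2 * i + 2)) ∈ H \ M := fun i hi => by
    simpa [Nat.add_mod] using hedges (2 * i + 1) (by omega)
  rcases k with _ | k
  · have hedge : s(v 0, v 1) ∈ G.edgeSet := hM (Finset.mem_sdiff.1 (hmem_M 0 le_rfl)).1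
    have hcov : Covers H (v 0) ∨ Covers H (v 1) := h.1.covers_or_covers_of_mem_edgeSet hG hedge
    exact absurd hcov (not_or.2 ⟨h0, h1⟩)
  have hfirst : s(v 0, v 1) ∈ H' :=
    h.mem_right_of_not_covers hM (hmem_M 0 (by omega)) (hmem_H 0 (by omega))
      (Sym2.mem_mk_left _ _) h0
  have hlast : s(v (2 * (k + 1)), v (2 * (k + 1) + 1)) ∈ H' := by
    have hmlast := hmem_M (k + 1) le_rfl
    rw [Sym2.eq_swap] at hmlast ⊢
    exact h.mem_right_of_not_covers hM hmlast (hmem_H k (by omega)) (Sym2.mem_mk_right _ _) h1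
  refine ⟨hfirst, hlast, ?_⟩
  rcases k with _ | k
  · have hmiddle : s(v 1, v 2) ∈ H := (Finset.mem_sdiff.1 (hmem_H 0 (by omega))).1
    have hcov : Covers H (v 0) ∨ Covers H (v 3) :=
      h.1.covers_or_covers_of_alternating hG hfirst hmiddle hlast
    exact absurd hcov (not_or.2 ⟨h0, h1⟩)
  · omega

/-- let `M` be a maximum matching, `(H, H') ∈ M₂(G, M)`, and
`P : v₀, m₁, v₁, h₁, …, m_l, v₂ₗ₋₁` a maximal `M`-`H` alternating path of odd length
starting and ending with edges of `M \ H` whose end-vertices are not covered by `H`.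
Then `m₁ ∈ H'`, `m_l ∈ H'`, and `l ≥ 3`. -/
theorem stmt5 {V : Type*} [Fintype V] [DecidableEq V] (G : SimpleGraph V)
    (M H H' : Finset (Sym2 V)) (hM : IsMatchingE G M) (hMmax : M.card = gBeta G)
    (hHH' : InM2M G M H H')
    (l : ℕ) (hl : 1 ≤ l) (v : ℕ → V)
    (hinj : ∀ i j, i < 2 * l → j < 2 * l → v i = v j → i = j)
    (hedges : ∀ i, i < 2 * l - 1 →
      s(v i, v (i + 1)) ∈ (if i % 2 = 0 then M \ H else H \ M))
    (h0 : ¬ Covers H (v 0)) (h1 : ¬ Covers H (v (2 * l - 1))) :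
    s(v 0, v 1) ∈ H' ∧ s(v (2 * l - 2), v (2 * l - 1)) ∈ H' ∧ 3 ≤ l :=
  stmt5_general (.of_finite G) hM.1 hHH' hl hedges h0 h1
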